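/- arXiv:2604.25556 — 2 statements merged into one kernel-verified Lean document; each statement's English description precedes it below -/
import Mathlib

section
/- Let H be a finite simple graph with vertex set [n], let K = {x ∈ ℝ^n : Ax ≥ b} be a polyhedron (with the bound constraints among its rows) such that K ⊆ FRAC(H), let U ⊆ V(H), and set r = α(H[U]). If y ∈ LAS_r(K) and x is its singleton projection (x_v = y_{{v}}), then Σ_{v ∈ U} x_v ≤ r. -/
/-!
Statement 1 (rank-closure lemma).

If `K = {x : Ax ≥ b} ⊆ FRAC(H)` (bound rows included), `U ⊆ V(H)`, `r = α(H[U])`, and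
`y ∈ LAS_r(K)`, then the singleton projection `x` of `y` satisfies `∑_{v ∈ U} x_v ≤ r`.
-/

open Finset

noncomputable def momentMatrix {ι : Type} [DecidableEq ι] (t : ℕ) (y : Finset ι → ℝ) :
    Matrix {I : Finset ι // I.card ≤ t} {I : Finset ι // I.card ≤ t} ℝ :=
  fun I J => y (I.1 ∪ J.1)

noncomputable def slackMatrix {ι κ : Type} [DecidableEq ι] [Fintype ι] (t : ℕ)
    (A : κ → ι → ℝ) (b : κ → ℝ) (ℓ : κ) (y : Finset ι → ℝ) :
    Matrix {I : Finset ι // I.card ≤ t} {I : Finset ι // I.card ≤ t} ℝ :=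
  fun I J => (∑ i : ι, A ℓ i * y (I.1 ∪ J.1 ∪ {i})) - b ℓ * y (I.1 ∪ J.1)

def LAS {ι κ : Type} [DecidableEq ι] [Fintype ι] (t : ℕ) (A : κ → ι → ℝ) (b : κ → ℝ) :
    Set (Finset ι → ℝ) :=
  {y | y ∅ = 1 ∧ (momentMatrix t y).PosSemidef ∧ ∀ ℓ : κ, (slackMatrix t A b ℓ y).PosSemidef}

/-- `s` is an independent (stable) set of `H`. -/
def IsIndep {E : Type} (H : SimpleGraph E) (s : Finset E) : Prop :=
  ∀ u ∈ s, ∀ v ∈ s, u ≠ v → ¬ H.Adj u v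

/-- `α(H[U])`: the maximum size of an independent set of `H` contained in `U`. -/
noncomputable def alphaOn {E : Type} (H : SimpleGraph E) (U : Finset E) : ℕ :=
  sSup {k | ∃ s : Finset E, s ⊆ U ∧ IsIndep H s ∧ s.card = k}

lemma rc_mob {ι : Type} [DecidableEq ι] [Fintype ι] (A B : Finset ι) :
    ∑ S : Finset ι, (if A ⊆ S ∧ S ⊆ B then (-1 : ℝ) ^ S.card else 0)
      = if A = B then (-1 : ℝ) ^ B.card else 0 := by
  rw [← Finset.sum_filter]
  by_cases hAB : A ⊆ B
  · have h1 : (Finset.univ.filter fun S : Finset ι => A ⊆ S ∧ S ⊆ B)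
        = (B \ A).powerset.image (A ∪ ·) := by
      rw [← Finset.Icc_eq_image_powerset hAB]
      ext S; simp
    rw [h1, Finset.sum_image]
    · have h2 : ∀ x ∈ (B \ A).powerset, (-1 : ℝ) ^ (A ∪ x).card
          = (-1) ^ A.card * (((-1 : ℤ) ^ x.card : ℤ) : ℝ) := by
        intro x hx
        rw [Finset.card_union_of_disjoint, pow_add]
        · push_cast; rfl
        · rw [Finset.mem_powerset] at hx
          exact Finset.disjoint_of_subset_right hx Finset.disjoint_sdiff
      rw [Finset.sum_congr rfl h2, ← Finset.mul_sum, ← Int.cast_sum,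
        Finset.sum_powerset_neg_one_pow_card]
      by_cases h : A = B
      · subst h; simp
      · have : B \ A ≠ ∅ := by
          intro h'
          exact h (Finset.Subset.antisymm hAB (Finset.sdiff_eq_empty_iff_subset.1 h'))
        simp [h, this]
    · intro x hx x' hx' hxx
      simp only [Finset.coe_powerset, Set.mem_preimage, Set.mem_powerset_iff,
        Finset.coe_subset] at hx hx'
      have hd := Finset.disjoint_of_subset_right hx Finset.disjoint_sdiff
      have hd' := Finset.disjoint_of_subset_right hx' Finset.disjoint_sdiff
      have e1 := Finset.union_sdiff_cancel_left hd
      have e2 := Finset.union_sdiff_cancel_left hd'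
      simp only at hxx
      rw [← e1, ← e2, hxx]
  · rw [if_neg (fun h => hAB h.le), Finset.sum_eq_zero]
    intro S hS
    simp only [Finset.mem_filter] at hS
    exact absurd (hS.2.1.trans hS.2.2) hAB

lemma rc_core {ι : Type} [DecidableEq ι] [Fintype ι] (r : ℕ) (z : Finset ι → ℝ)
    (hz : ∀ f : Finset ι → ℝ, 0 ≤ ∑ T, ∑ T', f T * f T' * z (T ∪ T'))
    (hr : ∀ T : Finset ι, r < T.card → z T = 0) :
    ∑ v, z {v} ≤ r * z ∅ := by
  obtain ⟨p, hp⟩ : ∃ p : Finset ι → ℝ, p = fun S => ∑ T : Finset ι,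
    if S ⊆ T then (-1 : ℝ) ^ S.card * (-1) ^ T.card * z T else 0 := ⟨_, rfl⟩
  have sq1 : ∀ k : ℕ, (-1 : ℝ) ^ k * (-1) ^ k = 1 := by
    intro k; rw [← mul_pow]; simp
  have h1 : ∀ T, z T = ∑ S, if T ⊆ S then p S else 0 := by
    intro T
    have : ∀ S : Finset ι, (if T ⊆ S then p S else 0) = ∑ T' : Finset ι,
        (-1 : ℝ) ^ T'.card * z T' * (if T ⊆ S ∧ S ⊆ T' then (-1 : ℝ) ^ S.card else 0) := by
      intro S
      by_cases h : T ⊆ S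
      · simp only [h, true_and, if_true, hp]
        refine Finset.sum_congr rfl fun T' _ => ?_
        split_ifs <;> ring
      · simp [h]
    simp_rw [this]
    rw [Finset.sum_comm]
    simp_rw [← Finset.mul_sum, rc_mob]
    rw [Finset.sum_eq_single T]
    · have := sq1 T.card
      simp only [if_true]
      linear_combination (- z T) * this
    · intro b _ hb; simp [hb.symm]
    · simp
  have h2 : ∀ f : Finset ι → ℝ, ∑ T, ∑ T', f T * f T' * z (T ∪ T')
      = ∑ S, p S * (∑ T, if T ⊆ S then f T else 0) ^ 2 := by
    intro f
    have : ∀ S, p S * (∑ T, if T ⊆ S then f T else 0) ^ 2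
        = ∑ T, ∑ T', f T * f T' * (if T ∪ T' ⊆ S then p S else 0) := by
      intro S
      rw [sq, Finset.sum_mul_sum, Finset.mul_sum]
      refine Finset.sum_congr rfl fun T _ => ?_
      rw [Finset.mul_sum]
      refine Finset.sum_congr rfl fun T' _ => ?_
      by_cases a : T ⊆ S <;> by_cases b : T' ⊆ S <;> simp [Finset.union_subset_iff, a, b]
      ring
    simp_rw [this]
    symm
    rw [Finset.sum_comm]
    refine Finset.sum_congr rfl fun T _ => ?_
    rw [Finset.sum_comm]
    refine Finset.sum_congr rfl fun T' _ => ?_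
    rw [h1, Finset.mul_sum]
  have h3 : ∀ S, 0 ≤ p S := by
    intro S0
    have := hz (fun T => if S0 ⊆ T then (-1 : ℝ) ^ T.card else 0)
    rw [h2] at this
    have e : ∀ S : Finset ι, (∑ T : Finset ι, if T ⊆ S then
        (if S0 ⊆ T then (-1 : ℝ) ^ T.card else 0) else 0)
        = if S0 = S then (-1 : ℝ) ^ S.card else 0 := by
      intro S
      rw [← rc_mob]
      refine Finset.sum_congr rfl fun T _ => ?_
      by_cases a : T ⊆ S <;> by_cases b : S0 ⊆ T <;> simp [a, b]
    simp_rw [e] at this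
    rw [Finset.sum_eq_single S0] at this
    · simp only [if_true] at this
      rw [sq, sq1, mul_one] at this
      exact this
    · intro b _ hb; simp [hb.symm]
    · simp
  have h4 : ∀ S : Finset ι, r < S.card → p S = 0 := by
    intro S hS
    rw [hp]
    refine Finset.sum_eq_zero fun T _ => ?_
    split_ifs with h
    · rw [hr T (hS.trans_le (Finset.card_le_card h)), mul_zero]
    · rfl
  have h5 : ∑ v, z {v} = ∑ S : Finset ι, (S.card : ℝ) * p S := by
    simp_rw [h1 {_}]
    rw [Finset.sum_comm]
    refine Finset.sum_congr rfl fun S _ => ?_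
    simp [Finset.singleton_subset_iff]
  rw [h5, h1 ∅, Finset.mul_sum]
  refine Finset.sum_le_sum fun S _ => ?_
  simp only [Finset.empty_subset, if_true]
  by_cases h : r < S.card
  · simp [h4 S h]
  · exact mul_le_mul_of_nonneg_right (by exact_mod_cast not_lt.1 h) (h3 S)

lemma rc_zero_row {α : Type} [Fintype α] [DecidableEq α] (M : Matrix α α ℝ) (hM : M.PosSemidef)
    (i j : α) (h : M i i = 0) : M i j = 0 := by
  by_cases hij : i = j
  · rw [← hij, h]
  have hs : M j i = M i j := by simpa using hM.isHermitian.apply i j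
  have key : ∀ c : ℝ, 0 ≤ 2 * c * M i j + M j j := by
    intro c
    have := hM.dotProduct_mulVec_nonneg (Pi.single i c + Pi.single j 1)
    simp [Matrix.mulVec_add, add_dotProduct, dotProduct_add, h, hs] at this
    linarith
  by_contra hne
  have := key (-(M j j + 1) / (2 * M i j))
  have e : 2 * (-(M j j + 1) / (2 * M i j)) * M i j = -(M j j + 1) := by field_simp
  rw [e] at this
  linarith

/-- **Rank-closure lemma.** -/
theorem rank_closure {n m : ℕ} (H : SimpleGraph (Fin n))
    (A : Fin m → Fin n → ℝ) (b : Fin m → ℝ)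
    (hlb : ∀ i : Fin n, ∃ ℓ : Fin m, (∀ j, A ℓ j = if j = i then 1 else 0) ∧ b ℓ = 0)
    (hub : ∀ i : Fin n, ∃ ℓ : Fin m, (∀ j, A ℓ j = if j = i then -1 else 0) ∧ b ℓ = -1)
    (hfrac : ∀ x : Fin n → ℝ, (∀ ℓ, b ℓ ≤ ∑ i, A ℓ i * x i) →
      (∀ v, 0 ≤ x v ∧ x v ≤ 1) ∧ ∀ u v, H.Adj u v → x u + x v ≤ 1)
    (U : Finset (Fin n)) (r : ℕ) (hr : r = alphaOn H U)
    (y : Finset (Fin n) → ℝ) (hy : y ∈ LAS r A b) :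
    ∑ v ∈ U, y {v} ≤ (r : ℝ) := by
  obtain ⟨hy0, hM, hS⟩ := hy
  have card_le : ∀ s ⊆ U, IsIndep H s → s.card ≤ r := by
    intro s hs hi
    rw [hr]
    refine le_csSup ⟨U.card, ?_⟩ ⟨s, hs, hi, rfl⟩
    rintro k ⟨s', h1, -, rfl⟩
    exact Finset.card_le_card h1
  have hynn : ∀ I : Finset (Fin n), I.card ≤ r → 0 ≤ y I := by
    intro I hI
    have := hM.diag_nonneg (i := ⟨I, hI⟩)
    simpa [momentMatrix] using this
  -- the slack matrix of the row `x_v ≥ 0`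
  have hslk : ∀ v, ∃ ℓ, ∀ I J, slackMatrix r A b ℓ y I J = y (I.1 ∪ J.1 ∪ {v}) := by
    intro v
    obtain ⟨ℓ, h1, h2⟩ := hlb v
    exact ⟨ℓ, fun I J => by simp [slackMatrix, h1, h2]⟩
  have hynn' : ∀ (I : Finset (Fin n)) v, I.card ≤ r → 0 ≤ y (I ∪ {v}) := by
    intro I v hI
    obtain ⟨ℓ, h⟩ := hslk v
    have := (hS ℓ).diag_nonneg (i := ⟨I, hI⟩)
    rw [h] at this
    simpa using this
  have hyle : ∀ (I : Finset (Fin n)) v, I.card ≤ r → y (I ∪ {v}) ≤ y I := by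
    intro I v hI
    obtain ⟨ℓ, h1, h2⟩ := hub v
    have := (hS ℓ).diag_nonneg (i := ⟨I, hI⟩)
    simp [slackMatrix, h1, h2] at this
    simpa using this
  have fact1 : ∀ (I : Finset (Fin n)) u v, I.card ≤ r → u ∈ I → H.Adj u v → y (I ∪ {v}) = 0 := by
    intro I u v hI hu huv
    rcases (hynn I hI).eq_or_lt with h0 | hpos
    · exact le_antisymm (h0 ▸ hyle I v hI) (hynn' I v hI)
    · have hk := (hfrac (fun i => y (I ∪ {i}) / y I) (by
        intro ℓ
        have := (hS ℓ).diag_nonneg (i := ⟨I, hI⟩)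
        simp only [slackMatrix, Finset.union_self] at this
        simp_rw [← mul_div_assoc]
        rw [← Finset.sum_div, le_div_iff₀ hpos]
        linarith)).2 u v huv
      have hIu : I ∪ {u} = I := Finset.union_eq_left.2 (by simpa using hu)
      simp only [hIu] at hk
      rw [div_self hpos.ne'] at hk
      have h3 : y (I ∪ {v}) / y I ≤ 0 := by linarith
      rw [div_le_iff₀ hpos, zero_mul] at h3
      exact le_antisymm h3 (hynn' I v hI)
  have fact2 : ∀ (T T' : Finset (Fin n)) u v, T.card ≤ r → T'.card ≤ r → u ∈ T → v ∈ T ∪ T' →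
      H.Adj u v → y (T ∪ T') = 0 := by
    intro T T' u v hT hT' hu hv huv
    obtain ⟨ℓ, h⟩ := hslk v
    have := rc_zero_row _ (hS ℓ) ⟨T, hT⟩ ⟨T', hT'⟩ (by
      rw [h]; simpa using fact1 T u v hT hu huv)
    rw [h] at this
    rwa [Finset.union_eq_left.2 (by simpa using hv)] at this
  have fact3 : ∀ (T T' : Finset (Fin n)), T ⊆ U → T' ⊆ U → T.card ≤ r → T'.card ≤ r →
      r < (T ∪ T').card → y (T ∪ T') = 0 := by
    intro T T' hTU hTU' hT hT' hc
    have hni : ¬ IsIndep H (T ∪ T') := fun hi =>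
      absurd (card_le _ (Finset.union_subset hTU hTU') hi) (not_le.2 hc)
    simp only [IsIndep, not_forall, not_not] at hni
    obtain ⟨u, hu, v, hv, -, huv⟩ := hni
    rcases Finset.mem_union.1 hu with h | h
    · exact fact2 T T' u v hT hT' h hv huv
    · rw [Finset.union_comm] at hv ⊢
      exact fact2 T' T u v hT' hT h hv huv
  have key := rc_core r (fun T => if T ⊆ U ∧ T.card ≤ r then y T else 0) (by
    intro f
    have hq := hM.dotProduct_mulVec_nonneg (fun I => if I.1 ⊆ U then f I.1 else 0)
    refine hq.trans_eq ?_
    simp only [dotProduct, Matrix.mulVec, momentMatrix, Pi.star_apply, star_trivial,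
      Finset.mul_sum]
    have conv : ∀ g : Finset (Fin n) → ℝ, (∀ T, ¬ T.card ≤ r → g T = 0) →
        ∑ I : {I : Finset (Fin n) // I.card ≤ r}, g I.1 = ∑ T, g T := by
      intro g hg
      rw [← Finset.sum_subtype (Finset.univ.filter fun I : Finset (Fin n) => I.card ≤ r)
        (by simp) g]
      refine Finset.sum_subset (Finset.subset_univ _) fun T _ hT => hg T (by simpa using hT)
    have big : ∀ T T' : Finset (Fin n), ¬ T.card ≤ r → ¬ (T ∪ T').card ≤ r := fun T T' h h' =>
      h ((Finset.card_le_card Finset.subset_union_left).trans h')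
    rw [← conv _ (by
      intro T hT
      refine Finset.sum_eq_zero fun T' _ => ?_
      rw [if_neg (fun h => big T T' hT h.2), mul_zero])]
    refine Finset.sum_congr rfl fun I _ => ?_
    rw [← conv _ (by
      intro T hT
      rw [if_neg (fun h => big T I.1 hT (by rw [Finset.union_comm]; exact h.2)), mul_zero])]
    refine Finset.sum_congr rfl fun J _ => ?_
    by_cases hI : I.1 ⊆ U
    · by_cases hJ : J.1 ⊆ U
      · by_cases hc : (I.1 ∪ J.1).card ≤ r
        · simp only [hI, hJ, hc, Finset.union_subset_iff, and_self, if_true]; ring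
        · simp [hI, hJ, hc, fact3 I.1 J.1 hI hJ I.2 J.2 (not_le.1 hc)]
      · simp [hJ, Finset.union_subset_iff]
    · simp [hI, Finset.union_subset_iff])
    (by
      intro T hT
      rw [if_neg (fun h => absurd h.2 (not_le.2 hT))])
  simp only [Finset.empty_subset, Finset.card_empty, Nat.zero_le, and_self, if_true, hy0,
    mul_one] at key
  refine le_trans (le_of_eq ?_) key
  rw [← Finset.sum_subset (Finset.subset_univ U)]
  · refine Finset.sum_congr rfl fun v hv => ?_
    have h1 : ({v} : Finset (Fin n)).card ≤ r := card_le {v} (by simpa using hv) (by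
      intro a ha c hc hne
      simp only [Finset.mem_singleton] at ha hc
      exact absurd (ha.trans hc.symm) hne)
    rw [if_pos ⟨by simpa using hv, h1⟩]
  · intro v _ hv
    rw [if_neg]
    intro h
    exact hv (by simpa using h.1)
end

section
/- Let J be an h-perfect finite simple graph and let ℓ ≥ 1 be an integer such that every odd hole of J has length at least 2ℓ+1. Let P(J) = {x ∈ ℝ^{V(J)} : x ≥ 0 and Σ_{v∈Q} x_v ≤ 1 for every clique Q of J} be the clique relaxation of the stable set polytope. Then (2ℓ/(2ℓ+1))·P(J) ⊆ STAB(J), i.e., for every z ∈ P(J) the scaled point (2ℓ/(2ℓ+1))·z lies in STAB(J). -/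
-- The stable set polytope of the induced subgraph `H[T]`, embedded in `ℝ^{V(H)}` by
-- extending by zero: the convex hull of the characteristic vectors of the independent
-- sets of `H` contained in `T`.
open scoped Classical in
noncomputable def STABon {E : Type} (H : SimpleGraph E) (T : Set E) : Set (E → ℝ) :=
  convexHull ℝ {x | ∃ s : Finset E, ↑s ⊆ T ∧ IsIndep H s ∧
    x = fun e => if e ∈ s then (1 : ℝ) else 0}

/-- `H[s]` is an induced cycle of length `m`: the vertices of `s` can be arranged cyclically
(indexed by `ZMod m`) so that exactly the consecutive pairs are adjacent. -/
def IsInducedCycle {E : Type} (H : SimpleGraph E) (s : Finset E) (m : ℕ) : Prop :=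
  3 ≤ m ∧ ∃ f : ZMod m → E, Function.Injective f ∧ (↑s = Set.range f) ∧
    ∀ i j : ZMod m, H.Adj (f i) (f j) ↔ (j = i + 1 ∨ i = j + 1)

/-- The polytope described by nonnegativity, clique inequalities and odd-hole inequalities
of the induced subgraph `H[T]` (embedded in `ℝ^{V(H)}` by extending by zero). -/
def cliqueOddHolePolytope {E : Type} (H : SimpleGraph E) (T : Set E) : Set (E → ℝ) :=
  {x | (∀ e, 0 ≤ x e) ∧ (∀ e, e ∉ T → x e = 0) ∧
    (∀ Q : Finset E, ↑Q ⊆ T → (∀ u ∈ Q, ∀ v ∈ Q, u ≠ v → H.Adj u v) →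
      ∑ e ∈ Q, x e ≤ 1) ∧
    (∀ (s : Finset E) (m : ℕ), ↑s ⊆ T → 5 ≤ m → Odd m → IsInducedCycle H s m →
      ∑ e ∈ s, x e ≤ ((m : ℝ) - 1) / 2)}

/-- The induced subgraph `H[T]` is h-perfect: its stable set polytope is described by
nonnegativity, clique inequalities and odd-hole inequalities. -/
def HPerfectOn {E : Type} (H : SimpleGraph E) (T : Set E) : Prop :=
  STABon H T = cliqueOddHolePolytope H T

/-- The clique relaxation `P(J)` of the stable set polytope: nonnegativity together with
all clique inequalities. -/
def cliqueRelax {E : Type} (J : SimpleGraph E) : Set (E → ℝ) :=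
  {x | (∀ v, 0 ≤ x v) ∧
    ∀ Q : Finset E, (∀ u ∈ Q, ∀ v ∈ Q, u ≠ v → J.Adj u v) → ∑ v ∈ Q, x v ≤ 1}

/-- **Scaling bound for h-perfect graphs** (Proposition `hperfect-scaling`):
if `J` is h-perfect and every odd hole of `J` has length at least `2ℓ+1`, then
`(2ℓ/(2ℓ+1)) · P(J) ⊆ STAB(J)`. -/
theorem hperfect_scaling {E : Type} (J : SimpleGraph E) (ℓ : ℕ) (hℓ : 1 ≤ ℓ)
    (hhp : HPerfectOn J Set.univ)
    (hholes : ∀ (s : Finset E) (m : ℕ), 5 ≤ m → Odd m → IsInducedCycle J s m →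
      2 * ℓ + 1 ≤ m)
    (z : E → ℝ) (hz : z ∈ cliqueRelax J) :
    ((2 * (ℓ : ℝ)) / (2 * (ℓ : ℝ) + 1)) • z ∈ STABon J Set.univ := by
  classical
  obtain ⟨hz0, hzQ⟩ := hz
  have hc0 : (0 : ℝ) ≤ (2 * (ℓ : ℝ)) / (2 * (ℓ : ℝ) + 1) := by positivity
  have hc1 : (2 * (ℓ : ℝ)) / (2 * (ℓ : ℝ) + 1) ≤ 1 := by
    rw [div_le_one (by positivity)]
    linarith
  unfold HPerfectOn at hhp
  rw [hhp]
  refine ⟨?_, ?_, ?_, ?_⟩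
  · intro e
    exact mul_nonneg hc0 (hz0 e)
  · intro e he
    exact absurd (Set.mem_univ e) he
  · intro Q _ hQ
    simp only [Pi.smul_apply, smul_eq_mul]
    rw [← Finset.mul_sum]
    have h1 := hzQ Q hQ
    have h0 : 0 ≤ ∑ v ∈ Q, z v := Finset.sum_nonneg fun v _ => hz0 v
    nlinarith
  · intro s m _ hm hodd hcyc
    have hlm := hholes s m hm hodd hcyc
    obtain ⟨_, f, hf, hs, hadj⟩ := hcyc
    haveI : NeZero m := ⟨by omega⟩
    simp only [Pi.smul_apply, smul_eq_mul]
    rw [← Finset.mul_sum]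
    have himg : s = Finset.univ.image f := by
      apply Finset.coe_injective
      rw [hs]
      simp
    have hsum : ∑ e ∈ s, z e = ∑ i : ZMod m, z (f i) := by
      rw [himg, Finset.sum_image (fun a _ b _ h => hf h)]
    have hshift : ∑ i : ZMod m, z (f (i + 1)) = ∑ i : ZMod m, z (f i) :=
      Equiv.sum_comp (Equiv.addRight (1 : ZMod m)) (fun i => z (f i))
    have hedge : ∀ i : ZMod m, z (f i) + z (f (i + 1)) ≤ 1 := by
      intro i
      have ha : J.Adj (f i) (f (i + 1)) := (hadj i (i + 1)).2 (Or.inl rfl)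
      have h := hzQ {f i, f (i + 1)} (by
        intro u hu v hv huv
        simp only [Finset.mem_insert, Finset.mem_singleton] at hu hv
        rcases hu with rfl | rfl <;> rcases hv with rfl | rfl
        · exact absurd rfl huv
        · exact ha
        · exact ha.symm
        · exact absurd rfl huv)
      rwa [Finset.sum_pair ha.ne] at h
    have htot : 2 * ∑ e ∈ s, z e ≤ m := by
      calc 2 * ∑ e ∈ s, z e = ∑ i : ZMod m, (z (f i) + z (f (i + 1))) := by
            rw [Finset.sum_add_distrib, hshift, hsum]
            ring
        _ ≤ ∑ _i : ZMod m, (1 : ℝ) := Finset.sum_le_sum fun i _ => hedge i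
        _ = m := by simp [ZMod.card]
    have hlm' : 2 * (ℓ : ℝ) + 1 ≤ m := by exact_mod_cast hlm
    rw [div_mul_eq_mul_div, div_le_iff₀ (by positivity)]
    have hl0 : (0 : ℝ) ≤ ℓ := Nat.cast_nonneg ℓ
    nlinarith [mul_le_mul_of_nonneg_left htot hl0]
end
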